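/- The second fundamental form of the Killing graph Σ of u, computed with respect to the unit normal N = (1/W)(γY − ϑ_*∇u) in the graph coordinates X_*(∂/∂x^i) = ∂/∂x^i + u_i ∂/∂x^0, has local components a_{ij} = u_{i;j}/W − (u_i/W)γ⟨∇̄_Y Y, ∂/∂x^j⟩ − (u_j/W)γ⟨∇̄_Y Y, ∂/∂x^i⟩ − (u_i u_j/W)⟨∇̄_Y Y, ∇u⟩, equivalently a_{ij} = u_{i;j}/W − (u_i/W)(γ_j/(2γ)) − (u_j/W)(γ_i/(2γ)) − (u_i u_j/(2W)) u^k γ_k/γ². -/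

import Mathlib

/-!
Formalization of the setting of "Mean curvature flow of Killing graphs"
(Lira–Wanderley).  The integral leaf `P` of the distribution orthogonal to the
Killing field `Y` is presented in coordinates as `ℝⁿ` (points `Fin n → ℝ`)
carrying a Riemannian metric `σ`; the ambient manifold is the warped product
`M = P ×_{1/√γ} ℝ` with coordinates `(x⁰ = s, x)` and metric
`ḡ = σ + (1/γ) ds²`, where `γ = 1/|Y|²` and `Y = ∂/∂x⁰`.  All geometric
quantities (Christoffel symbols, second fundamental form and mean curvature of
a Killing graph, ambient Ricci curvature, …) are defined concretely from this
data.
-/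

noncomputable section

open Real MeasureTheory Filter Topology

namespace KMCF

variable {n : ℕ}

/-- Partial derivative of a function on the coordinate chart of the leaf `P`. -/
def pd (f : (Fin n → ℝ) → ℝ) (i : Fin n) (x : Fin n → ℝ) : ℝ :=
  fderiv ℝ f x (Pi.single i 1)

/-- Component of an ambient tangent vector `(v⁰, vⁱ)` of `M = P ×_{1/√γ} ℝ`. -/
def vComp (v : ℝ × (Fin n → ℝ)) (a : Fin (n + 1)) : ℝ :=
  if ha : a = 0 then v.1 else v.2 (a.pred ha)

/-- Ambient partial derivative (nothing depends on the flow parameter `x⁰`). -/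
def ambPd (f : (Fin n → ℝ) → ℝ) (a : Fin (n + 1)) (x : Fin n → ℝ) : ℝ :=
  if ha : a = 0 then 0 else pd f (a.pred ha) x

/-- Coordinate tangent vectors `X_* ∂_i = ∂_i + u_i ∂_0` of the Killing graph
`X(x) = ϑ(u(x), x)`. -/
def tangentV (u : (Fin n → ℝ) → ℝ) (i : Fin n) (x : Fin n → ℝ) : ℝ × (Fin n → ℝ) :=
  (pd u i x, Pi.single i 1)

/-- Coordinate data of the integral leaf `P`: the metric `σ`, its inverse, and
the warping function `γ = 1/|Y|²` of the Killing field `Y`. -/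
structure LeafData (n : ℕ) where
  σ : (Fin n → ℝ) → Fin n → Fin n → ℝ
  σInv : (Fin n → ℝ) → Fin n → Fin n → ℝ
  γ : (Fin n → ℝ) → ℝ
  σ_symm : ∀ x i j, σ x i j = σ x j i
  σ_posdef : ∀ x (v : Fin n → ℝ), v ≠ 0 → 0 < ∑ i, ∑ j, σ x i j * v i * v j
  σInv_mul_σ : ∀ x i j, (∑ k, σInv x i k * σ x k j) = if i = j then (1 : ℝ) else 0
  σ_smooth : ∀ i j, ContDiff ℝ (⊤ : ℕ∞) fun x => σ x i j
  γ_pos : ∀ x, 0 < γ x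
  γ_smooth : ContDiff ℝ (⊤ : ℕ∞) γ

namespace LeafData

variable (D : LeafData n)

/-- Christoffel symbols `Γ^k_{ij}` of the leaf metric `σ`. -/
def Γc (x : Fin n → ℝ) (i j k : Fin n) : ℝ :=
  (1 / 2) * ∑ l, D.σInv x k l *
    (pd (fun y => D.σ y j l) i x + pd (fun y => D.σ y i l) j x -
      pd (fun y => D.σ y i j) l x)

/-- Covariant Hessian `f_{i;j}` in `P`. -/
def hess (f : (Fin n → ℝ) → ℝ) (i j : Fin n) (x : Fin n → ℝ) : ℝ :=
  pd (pd f j) i x - ∑ k, D.Γc x i j k * pd f k x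

/-- Raised gradient components `f^i = σ^{ij} f_j`. -/
def gradUp (f : (Fin n → ℝ) → ℝ) (i : Fin n) (x : Fin n → ℝ) : ℝ :=
  ∑ j, D.σInv x i j * pd f j x

/-- Inner product `⟨∇f, ∇g⟩` of gradients in `P`. -/
def inner2 (f g : (Fin n → ℝ) → ℝ) (x : Fin n → ℝ) : ℝ :=
  ∑ i, ∑ j, D.σInv x i j * pd f i x * pd g j x

/-- `|∇u|²`. -/
def gradSq (u : (Fin n → ℝ) → ℝ) (x : Fin n → ℝ) : ℝ := D.inner2 u u x

/-- `W = √(γ + |∇u|²)`. -/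
def Wf (u : (Fin n → ℝ) → ℝ) (x : Fin n → ℝ) : ℝ :=
  Real.sqrt (D.γ x + D.gradSq u x)

/-- Divergence in `P` of a vector field with raised components `Z^i`. -/
def divP (Z : Fin n → (Fin n → ℝ) → ℝ) (x : Fin n → ℝ) : ℝ :=
  ∑ i, (pd (Z i) i x + ∑ k, D.Γc x i k i * Z k x)

/-- Divergence in the ambient warped product `M = P ×_{1/√γ} ℝ` of an
`s`-independent horizontal vector field (`Γ̄⁰_{0i} = −γ_i/(2γ)`). -/
def divM (Z : Fin n → (Fin n → ℝ) → ℝ) (x : Fin n → ℝ) : ℝ :=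
  D.divP Z x - ∑ i, (pd D.γ i x / (2 * D.γ x)) * Z i x

/-- The ambient warped-product metric `ḡ` of `M` in the coordinates
`(x⁰ = s, x)`:  `ḡ₀₀ = 1/γ`, `ḡ₀ᵢ = 0`, `ḡᵢⱼ = σᵢⱼ`. -/
def ambG (x : Fin n → ℝ) (a b : Fin (n + 1)) : ℝ :=
  if ha : a = 0 then (if b = 0 then 1 / D.γ x else 0)
  else if hb : b = 0 then 0 else D.σ x (a.pred ha) (b.pred hb)

/-- The inverse ambient metric. -/
def ambGInv (x : Fin n → ℝ) (a b : Fin (n + 1)) : ℝ :=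
  if ha : a = 0 then (if b = 0 then D.γ x else 0)
  else if hb : b = 0 then 0 else D.σInv x (a.pred ha) (b.pred hb)

/-- Ambient Christoffel symbols `Γ̄^a_{bc}` of the warped-product metric. -/
def ambΓ (x : Fin n → ℝ) (a b c : Fin (n + 1)) : ℝ :=
  (1 / 2) * ∑ e, D.ambGInv x a e *
    (ambPd (fun y => D.ambG y b e) c x + ambPd (fun y => D.ambG y c e) b x -
      ambPd (fun y => D.ambG y b c) e x)

/-- Ambient curvature tensor `R̄^a_{bcd}`. -/
def ambRiem (x : Fin n → ℝ) (a b c d : Fin (n + 1)) : ℝ :=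
  ambPd (fun y => D.ambΓ y a d b) c x - ambPd (fun y => D.ambΓ y a c b) d x +
    (∑ e, D.ambΓ x a c e * D.ambΓ x e d b) -
    ∑ e, D.ambΓ x a d e * D.ambΓ x e c b

/-- Ambient Ricci curvature as a bilinear form on tangent vectors of `M`. -/
def Ric (x : Fin n → ℝ) (v w : ℝ × (Fin n → ℝ)) : ℝ :=
  ∑ b, ∑ c, (∑ a, D.ambRiem x a b a c) * vComp v b * vComp w c

/-- The ambient Riemannian inner product `⟨·,·⟩` at `x`. -/
def ambInner (x : Fin n → ℝ) (v w : ℝ × (Fin n → ℝ)) : ℝ :=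
  ∑ a, ∑ b, D.ambG x a b * vComp v a * vComp w b

/-- Ambient covariant derivative `∇̄_v Z` of an `s`-independent vector field
`Z` in the direction of the tangent vector `v` at `x`. -/
def ambCov (Z : (Fin n → ℝ) → ℝ × (Fin n → ℝ)) (v : ℝ × (Fin n → ℝ))
    (x : Fin n → ℝ) : ℝ × (Fin n → ℝ) :=
  ((∑ i, v.2 i * pd (fun y => (Z y).1) i x) +
      ∑ b, ∑ c, D.ambΓ x 0 b c * vComp v b * vComp (Z x) c,
    fun k =>
      (∑ i, v.2 i * pd (fun y => (Z y).2 k) i x) +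
        ∑ b, ∑ c, D.ambΓ x k.succ b c * vComp v b * vComp (Z x) c)

/-- The unit normal `N = (1/W)(γ Y − ϑ_* ∇u)` of the Killing graph. -/
def normalN (u : (Fin n → ℝ) → ℝ) (x : Fin n → ℝ) : ℝ × (Fin n → ℝ) :=
  (D.γ x / D.Wf u x, fun k => -D.gradUp u k x / D.Wf u x)

/-- Second fundamental form `a_{ij} = ⟨∇̄_{X_*∂_i} X_*∂_j, N⟩` of the graph. -/
def sff (u : (Fin n → ℝ) → ℝ) (i j : Fin n) (x : Fin n → ℝ) : ℝ :=
  D.ambInner x (D.ambCov (fun y => tangentV u j y) (tangentV u i x) x)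
    (D.normalN u x)

/-- Induced metric `g_{ij} = σ_{ij} + u_i u_j / γ` of the graph. -/
def gmet (u : (Fin n → ℝ) → ℝ) (x : Fin n → ℝ) (i j : Fin n) : ℝ :=
  D.σ x i j + pd u i x * pd u j x / D.γ x

/-- Inverse induced metric `g^{ij} = σ^{ij} − u^i u^j / W²`. -/
def gInv (u : (Fin n → ℝ) → ℝ) (x : Fin n → ℝ) (i j : Fin n) : ℝ :=
  D.σInv x i j - D.gradUp u i x * D.gradUp u j x / (D.Wf u x) ^ 2

/-- `n` times the mean curvature of the graph: `nH = g^{ij} a_{ij}`. -/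
def nH (u : (Fin n → ℝ) → ℝ) (x : Fin n → ℝ) : ℝ :=
  ∑ i, ∑ j, D.gInv u x i j * D.sff u i j x

/-- Christoffel symbols of the induced metric of the graph. -/
def Γg (u : (Fin n → ℝ) → ℝ) (x : Fin n → ℝ) (i j k : Fin n) : ℝ :=
  (1 / 2) * ∑ l, D.gInv u x k l *
    (pd (fun y => D.gmet u y j l) i x + pd (fun y => D.gmet u y i l) j x -
      pd (fun y => D.gmet u y i j) l x)

/-- Covariant derivative `∇_k T_{ij}` in `P` of a 2-tensor. -/
def covP2 (T : Fin n → Fin n → (Fin n → ℝ) → ℝ) (k i j : Fin n)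
    (x : Fin n → ℝ) : ℝ :=
  pd (T i j) k x - ∑ l, D.Γc x k i l * T l j x - ∑ l, D.Γc x k j l * T i l x

/-- Covariant derivative `∇^Σ_k T_{ij}` on the graph of a 2-tensor. -/
def covG2 (u : (Fin n → ℝ) → ℝ) (T : Fin n → Fin n → (Fin n → ℝ) → ℝ)
    (k i j : Fin n) (x : Fin n → ℝ) : ℝ :=
  pd (T i j) k x - ∑ l, D.Γg u x k i l * T l j x - ∑ l, D.Γg u x k j l * T i l x

/-- Components of the gradient on `Σ` of a function of `x`. -/
def gradG (u f : (Fin n → ℝ) → ℝ) (j : Fin n) (x : Fin n → ℝ) : ℝ :=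
  ∑ k, D.gInv u x j k * pd f k x

/-- Components, in the basis `X_*∂_i`, of the tangential projection `Y^T`
of the Killing field:  `Y^T = (u^i/W²) X_*∂_i`. -/
def YTc (u : (Fin n → ℝ) → ℝ) (i : Fin n) (x : Fin n → ℝ) : ℝ :=
  D.gradUp u i x / (D.Wf u x) ^ 2

/-- Squared norm `|A|²` of the second fundamental form. -/
def Anorm2 (u : (Fin n → ℝ) → ℝ) (x : Fin n → ℝ) : ℝ :=
  ∑ i, ∑ j, ∑ k, ∑ l,
    D.gInv u x i k * D.gInv u x j l * D.sff u i j x * D.sff u k l x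

/-- Mixed components `a_i^j = g^{jk} a_{ik}` of the Weingarten map. -/
def aMix (u : (Fin n → ℝ) → ℝ) (i j : Fin n) (x : Fin n → ℝ) : ℝ :=
  ∑ k, D.gInv u x j k * D.sff u i k x

/-- Raised spatial components `N^j = −u^j/W` of the unit normal. -/
def NupS (u : (Fin n → ℝ) → ℝ) (j : Fin n) (x : Fin n → ℝ) : ℝ :=
  -D.gradUp u j x / D.Wf u x

/-- The support-type function `θ = ⟨∇d, N⟩`. -/
def theta (u d : (Fin n → ℝ) → ℝ) (x : Fin n → ℝ) : ℝ :=
  D.ambInner x ((0 : ℝ), fun k => D.gradUp d k x) (D.normalN u x)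

/-- `κ = ⟨γ ∇̄_Y Y, ∇d⟩ = ⟨∇γ, ∇d⟩/(2γ)`. -/
def kappa (d : (Fin n → ℝ) → ℝ) (x : Fin n → ℝ) : ℝ :=
  D.inner2 D.γ d x / (2 * D.γ x)

/-- The Korevaar auxiliary function `h = 1 + α d − ϕ ⟨∇d, N⟩`. -/
def hKor (u d ϕ : (Fin n → ℝ) → ℝ) (α : ℝ) (x : Fin n → ℝ) : ℝ :=
  1 + α * d x - ϕ x * D.theta u d x

/-- `η = e^{Ku} h`. -/
def etaKor (u d ϕ : (Fin n → ℝ) → ℝ) (K α : ℝ) (x : Fin n → ℝ) : ℝ :=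
  Real.exp (K * u x) * D.hKor u d ϕ α x

/-- Riemannian integral over `Ω ⊆ P` (density `√(det σ)`). -/
def intP (Ω : Set (Fin n → ℝ)) (f : (Fin n → ℝ) → ℝ) : ℝ :=
  ∫ x in Ω, f x * Real.sqrt (Matrix.det (Matrix.of fun i j => D.σ x i j))

/-- The nonparametric mean curvature flow equation (23):
`u_t = (σ^{ij} − u^i u^j/W²) u_{i;j} − (1/(2γ) + 1/(2W²)) γ^i u_i − W𝓗`. -/
def SolvesFlowOn (Ω : Set (Fin n → ℝ)) (J : Set ℝ) (𝓗 : (Fin n → ℝ) → ℝ)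
    (u : (Fin n → ℝ) → ℝ → ℝ) : Prop :=
  ∀ x ∈ Ω, ∀ t ∈ J,
    deriv (u x) t =
      (∑ i, ∑ j, D.gInv (fun y => u y t) x i j * D.hess (fun y => u y t) i j x) -
        (1 / (2 * D.γ x) + 1 / (2 * (D.Wf (fun y => u y t) x) ^ 2)) *
          D.inner2 D.γ (fun y => u y t) x -
        D.Wf (fun y => u y t) x * 𝓗 x

/-- The divergence form (21) of the flow equation:
`u_t = W div(∇u/W) − W𝓗 − γ⟨∇̄_Y Y, ∇u⟩`. -/
def SolvesFlowDivOn (Ω : Set (Fin n → ℝ)) (J : Set ℝ) (𝓗 : (Fin n → ℝ) → ℝ)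
    (u : (Fin n → ℝ) → ℝ → ℝ) : Prop :=
  ∀ x ∈ Ω, ∀ t ∈ J,
    deriv (u x) t =
      D.Wf (fun y => u y t) x *
          D.divP (fun i y => D.gradUp (fun z => u z t) i y /
            D.Wf (fun z => u z t) y) x -
        D.Wf (fun y => u y t) x * 𝓗 x -
        D.γ x * (D.inner2 D.γ (fun y => u y t) x / (2 * (D.γ x) ^ 2))

/-- The Neumann condition `⟨N, ν⟩ = ϕ` on `∂Ω`. -/
def NeumannOn (Ω : Set (Fin n → ℝ)) (J : Set ℝ) (ν : (Fin n → ℝ) → Fin n → ℝ)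
    (ϕ : (Fin n → ℝ) → ℝ) (u : (Fin n → ℝ) → ℝ → ℝ) : Prop :=
  ∀ x ∈ frontier Ω, ∀ t ∈ J,
    D.ambInner x (D.normalN (fun y => u y t) x) ((0 : ℝ), ν x) = ϕ x

/-- The stationary prescribed mean curvature equation (5) with the prescribed
contact angle condition (6). -/
def SolvesStationary (Ω : Set (Fin n → ℝ)) (ν : (Fin n → ℝ) → Fin n → ℝ)
    (𝓗 ϕ : (Fin n → ℝ) → ℝ) (v : (Fin n → ℝ) → ℝ) : Prop :=
  (∀ x ∈ Ω,
      D.divP (fun i y => D.gradUp v i y / D.Wf v y) x -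
          D.γ x * (D.inner2 D.γ v x / (2 * (D.γ x) ^ 2 * D.Wf v x)) = 𝓗 x) ∧
    ∀ x ∈ frontier Ω, D.ambInner x (D.normalN v x) ((0 : ℝ), ν x) = ϕ x

/-- The translating-soliton equation (41) with Neumann condition (42). -/
def SolvesSoliton (Ω : Set (Fin n → ℝ)) (ν : (Fin n → ℝ) → Fin n → ℝ)
    (𝓗 ϕ : (Fin n → ℝ) → ℝ) (C : ℝ) (v : (Fin n → ℝ) → ℝ) : Prop :=
  (∀ x ∈ Ω,
      D.divP (fun i y => D.gradUp v i y / D.Wf v y) x -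
          D.γ x * (D.inner2 D.γ v x / (2 * (D.γ x) ^ 2 * D.Wf v x)) =
        𝓗 x + C / D.Wf v x) ∧
    ∀ x ∈ frontier Ω, D.ambInner x (D.normalN v x) ((0 : ℝ), ν x) = ϕ x

end LeafData

end KMCF

namespace KMCF

open LeafData

/-!
In the coordinates `(x⁰, x)` the metric `σ + γ⁻¹ (dx⁰)²` does not depend on `x⁰`; its nonzero
Christoffel symbols are those of the leaf and `Γ̄⁰₀ₖ = Γ̄⁰ₖ₀ = -γₖ/(2γ)` and
`Γ̄ᵏ₀₀ = γᵏ/(2γ²)`; the last one says `∇̄_Y Y = ∇γ/(2γ²)`. Pairing with `W N = γ Y - ∇u` sends an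
ambient vector `v` to `v⁰ - vᵏ uₖ`. For `v = ∇̄_{X_*∂ᵢ} X_*∂ⱼ` the second derivatives of `u` in
`v⁰` and the leaf symbols in `vᵏ` combine into the covariant Hessian, and what is left are the
`γ`-terms.
-/

section Coordinates

variable {n : ℕ}

@[simp]
theorem vComp_zero (v : ℝ × (Fin n → ℝ)) : vComp v 0 = v.1 := by
  simp [vComp]

@[simp]
theorem vComp_succ (v : ℝ × (Fin n → ℝ)) (k : Fin n) : vComp v k.succ = v.2 k := by
  simp [vComp]

@[simp]
theorem ambPd_zero (f : (Fin n → ℝ) → ℝ) (x : Fin n → ℝ) : ambPd f 0 x = 0 := by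
  simp [ambPd]

@[simp]
theorem ambPd_succ (f : (Fin n → ℝ) → ℝ) (k : Fin n) (x : Fin n → ℝ) :
    ambPd f k.succ x = pd f k x := by
  simp [ambPd]

@[simp]
theorem pd_const (c : ℝ) (i : Fin n) (x : Fin n → ℝ) : pd (fun _ => c) i x = 0 := by
  simp [pd]

theorem pd_one_div {f : (Fin n → ℝ) → ℝ} {x : Fin n → ℝ} (hf : DifferentiableAt ℝ f x)
    (hx : f x ≠ 0) (i : Fin n) : pd (fun y => 1 / f y) i x = -(pd f i x / f x ^ 2) := by
  have hinv := (hasDerivAt_inv hx).comp_hasFDerivAt x hf.hasFDerivAt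
  simp only [pd, one_div]
  rw [show (fun y => (f y)⁻¹) = Inv.inv ∘ f from rfl, hinv.fderiv]
  simp only [smul_apply, smul_eq_mul]
  ring

end Coordinates

namespace LeafData

variable {n : ℕ} (D : LeafData n) (x : Fin n → ℝ)

section LeafMetric

theorem of_σInv_mul_of_σ : Matrix.of (D.σInv x) * Matrix.of (D.σ x) = 1 := by
  ext i j
  simp [Matrix.mul_apply, Matrix.one_apply, D.σInv_mul_σ]

theorem σInv_symm (i j : Fin n) : D.σInv x i j = D.σInv x j i := by
  have hσ : (Matrix.of (D.σ x)).IsSymm := Matrix.IsSymm.ext fun i j => D.σ_symm x j i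
  have hinv : (Matrix.of (D.σ x))⁻¹ = Matrix.of (D.σInv x) :=
    Matrix.inv_eq_left_inv (D.of_σInv_mul_of_σ x)
  have hσInv : (Matrix.of (D.σInv x)).IsSymm := hinv ▸ hσ.inv
  exact hσInv.apply j i

open scoped Matrix in
theorem sum_σ_mul_gradUp (f : (Fin n → ℝ) → ℝ) (k : Fin n) :
    ∑ l, D.σ x k l * D.gradUp f l x = pd f k x := by
  have hmul : Matrix.of (D.σ x) * Matrix.of (D.σInv x) = 1 :=
    mul_eq_one_comm.mp (D.of_σInv_mul_of_σ x)
  have hvec : Matrix.of (D.σ x) *ᵥ (Matrix.of (D.σInv x) *ᵥ fun j => pd f j x) =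
      fun j => pd f j x := by
    rw [Matrix.mulVec_mulVec, hmul, Matrix.one_mulVec]
  exact congrFun hvec k

theorem sum_gradUp_mul_pd (f g : (Fin n → ℝ) → ℝ) :
    ∑ k, D.gradUp f k x * pd g k x = D.inner2 g f x := by
  simp only [gradUp, inner2, Finset.sum_mul]
  exact Finset.sum_congr rfl fun k _ => Finset.sum_congr rfl fun l _ => by ring

theorem inner2_comm (f g : (Fin n → ℝ) → ℝ) : D.inner2 f g x = D.inner2 g f x := by
  rw [inner2, inner2, Finset.sum_comm]
  refine Finset.sum_congr rfl fun j _ => Finset.sum_congr rfl fun i _ => ?_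
  rw [D.σInv_symm x i j]
  ring

end LeafMetric

section AmbientMetric

@[simp]
theorem ambG_zero_zero : D.ambG x 0 0 = 1 / D.γ x := by
  simp [ambG]

@[simp]
theorem ambG_zero_succ (k : Fin n) : D.ambG x 0 k.succ = 0 := by
  simp [ambG]

@[simp]
theorem ambG_succ_zero (k : Fin n) : D.ambG x k.succ 0 = 0 := by
  simp [ambG]

@[simp]
theorem ambG_succ_succ (k l : Fin n) : D.ambG x k.succ l.succ = D.σ x k l := by
  simp [ambG]

@[simp]
theorem ambGInv_zero_zero : D.ambGInv x 0 0 = D.γ x := by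
  simp [ambGInv]

@[simp]
theorem ambGInv_zero_succ (k : Fin n) : D.ambGInv x 0 k.succ = 0 := by
  simp [ambGInv]

@[simp]
theorem ambGInv_succ_zero (k : Fin n) : D.ambGInv x k.succ 0 = 0 := by
  simp [ambGInv]

@[simp]
theorem ambGInv_succ_succ (k l : Fin n) : D.ambGInv x k.succ l.succ = D.σInv x k l := by
  simp [ambGInv]

theorem ambG_symm (a b : Fin (n + 1)) : D.ambG x a b = D.ambG x b a := by
  cases a using Fin.cases <;> cases b using Fin.cases <;> simp [D.σ_symm x]

theorem ambInner_eq (v w : ℝ × (Fin n → ℝ)) :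
    D.ambInner x v w = v.1 * w.1 / D.γ x + ∑ k, ∑ l, D.σ x k l * v.2 k * w.2 l := by
  simp only [ambInner, Fin.sum_univ_succ, vComp_zero, vComp_succ, ambG_zero_zero,
    ambG_zero_succ, ambG_succ_zero, ambG_succ_succ, zero_mul, Finset.sum_const_zero, zero_add]
  ring

theorem ambInner_normalN (u : (Fin n → ℝ) → ℝ) (v : ℝ × (Fin n → ℝ)) :
    D.ambInner x v (D.normalN u x) = (v.1 - ∑ k, v.2 k * pd u k x) / D.Wf u x := by
  have hγ := (D.γ_pos x).ne'
  have hleaf : ∑ k, ∑ l, D.σ x k l * v.2 k * (-D.gradUp u l x / D.Wf u x) =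
      -(∑ k, v.2 k * pd u k x) / D.Wf u x := by
    simp only [← D.sum_σ_mul_gradUp x u, Finset.mul_sum, ← Finset.sum_neg_distrib,
      Finset.sum_div]
    exact Finset.sum_congr rfl fun k _ => Finset.sum_congr rfl fun l _ => by ring
  have hvert : v.1 * (D.γ x / D.Wf u x) / D.γ x = v.1 / D.Wf u x := by
    field_simp
  rw [ambInner_eq, normalN, hleaf, hvert]
  ring

end AmbientMetric

section Christoffel

theorem ambΓ_symm (a b c : Fin (n + 1)) : D.ambΓ x a b c = D.ambΓ x a c b := by
  simp only [ambΓ, fun y => D.ambG_symm y c b]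
  congr 1
  exact Finset.sum_congr rfl fun e _ => by ring

theorem pd_one_div_γ (k : Fin n) : pd (fun y => 1 / D.γ y) k x = -(pd D.γ k x / D.γ x ^ 2) :=
  pd_one_div (D.γ_smooth.differentiable (by simp) x) (D.γ_pos x).ne' k

theorem ambΓ_zero_zero_zero : D.ambΓ x 0 0 0 = 0 := by
  simp [ambΓ, Fin.sum_univ_succ]

theorem ambΓ_zero_zero_succ (k : Fin n) :
    D.ambΓ x 0 0 k.succ = -(pd D.γ k x / (2 * D.γ x)) := by
  have hγ := (D.γ_pos x).ne'
  simp only [ambΓ, Fin.sum_univ_succ, ambGInv_zero_zero, ambGInv_zero_succ, ambPd_zero,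
    ambPd_succ, ambG_zero_zero, pd_one_div_γ, zero_mul, Finset.sum_const_zero]
  field_simp
  ring

theorem ambΓ_zero_succ_succ (k l : Fin n) : D.ambΓ x 0 k.succ l.succ = 0 := by
  simp [ambΓ, Fin.sum_univ_succ]

theorem ambΓ_succ_zero_zero (k : Fin n) :
    D.ambΓ x k.succ 0 0 = D.gradUp D.γ k x / (2 * D.γ x ^ 2) := by
  simp only [ambΓ, gradUp, Fin.sum_univ_succ, ambGInv_succ_zero, ambGInv_succ_succ, ambPd_zero,
    ambPd_succ, ambG_zero_zero, pd_one_div_γ, Finset.mul_sum, Finset.sum_div, zero_mul,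
    zero_add]
  exact Finset.sum_congr rfl fun l _ => by ring

theorem ambΓ_succ_zero_succ (k l : Fin n) : D.ambΓ x k.succ 0 l.succ = 0 := by
  simp [ambΓ, Fin.sum_univ_succ]

theorem ambΓ_succ_succ_succ (k i j : Fin n) :
    D.ambΓ x k.succ i.succ j.succ = D.Γc x i j k := by
  simp only [ambΓ, Γc, Fin.sum_univ_succ, ambGInv_succ_zero, ambGInv_succ_succ, ambPd_succ,
    ambG_succ_succ, zero_mul, zero_add]
  congr 1
  exact Finset.sum_congr rfl fun l _ => by ring

end Christoffel

section CovariantDerivative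

variable (Z : (Fin n → ℝ) → ℝ × (Fin n → ℝ)) (v : ℝ × (Fin n → ℝ))

theorem ambCov_fst :
    (D.ambCov Z v x).1 = (∑ i, v.2 i * pd (fun y => (Z y).1) i x) -
      v.1 * ((∑ k, pd D.γ k x * (Z x).2 k) / (2 * D.γ x)) -
      (Z x).1 * ((∑ k, pd D.γ k x * v.2 k) / (2 * D.γ x)) := by
  simp only [ambCov, Fin.sum_univ_succ, vComp_zero, vComp_succ, ambΓ_zero_zero_zero,
    ambΓ_zero_zero_succ, D.ambΓ_symm x 0 (Fin.succ _) 0, ambΓ_zero_succ_succ, zero_mul,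
    Finset.sum_const_zero, zero_add, add_zero, Finset.sum_div, Finset.mul_sum,
    sub_eq_add_neg, ← Finset.sum_neg_distrib, add_assoc]
  congr 2 <;> exact Finset.sum_congr rfl fun k _ => by ring

theorem ambCov_snd (k : Fin n) :
    (D.ambCov Z v x).2 k = (∑ i, v.2 i * pd (fun y => (Z y).2 k) i x) +
      (∑ i, ∑ j, D.Γc x i j k * v.2 i * (Z x).2 j) +
      v.1 * (Z x).1 * (D.gradUp D.γ k x / (2 * D.γ x ^ 2)) := by
  simp only [ambCov, Fin.sum_univ_succ, vComp_zero, vComp_succ, ambΓ_succ_zero_zero,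
    ambΓ_succ_zero_succ, D.ambΓ_symm x _ (Fin.succ _) 0, ambΓ_succ_succ_succ, zero_mul,
    Finset.sum_const_zero, zero_add, add_zero]
  ring

variable (u : (Fin n → ℝ) → ℝ) (i j : Fin n)

theorem ambCov_tangentV_fst :
    (D.ambCov (tangentV u j) (tangentV u i x) x).1 =
      pd (pd u j) i x - pd u i x * (pd D.γ j x / (2 * D.γ x)) -
        pd u j x * (pd D.γ i x / (2 * D.γ x)) := by
  simp [ambCov_fst, tangentV, Pi.single_apply]

theorem ambCov_tangentV_snd (k : Fin n) :
    (D.ambCov (tangentV u j) (tangentV u i x) x).2 k =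
      D.Γc x i j k + pd u i x * pd u j x * (D.gradUp D.γ k x / (2 * D.γ x ^ 2)) := by
  simp [ambCov_snd, tangentV, Pi.single_apply]

theorem sum_ambCov_tangentV_snd_mul_pd :
    ∑ k, (D.ambCov (tangentV u j) (tangentV u i x) x).2 k * pd u k x =
      (∑ k, D.Γc x i j k * pd u k x) +
        pd u i x * pd u j x * (D.inner2 D.γ u x / (2 * D.γ x ^ 2)) := by
  rw [D.inner2_comm x D.γ u, ← D.sum_gradUp_mul_pd x D.γ u]
  simp only [ambCov_tangentV_snd, Finset.sum_div, Finset.mul_sum, ← Finset.sum_add_distrib]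
  exact Finset.sum_congr rfl fun k _ => by ring

end CovariantDerivative

end LeafData

theorem second_fundamental_form_of_killing_graph_general
    {n : ℕ} (D : LeafData n) {u : (Fin n → ℝ) → ℝ} {x : Fin n → ℝ}
    (_hu : ContDiffAt ℝ 2 u x) (i j : Fin n) :
    (D.sff u i j x =
        D.hess u i j x / D.Wf u x -
          pd u i x / D.Wf u x * (D.γ x * (pd D.γ j x / (2 * (D.γ x) ^ 2))) -
          pd u j x / D.Wf u x * (D.γ x * (pd D.γ i x / (2 * (D.γ x) ^ 2))) -
          pd u i x * pd u j x / D.Wf u x *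
            (D.inner2 D.γ u x / (2 * (D.γ x) ^ 2))) ∧
      D.sff u i j x =
        D.hess u i j x / D.Wf u x -
          pd u i x / D.Wf u x * (pd D.γ j x / (2 * D.γ x)) -
          pd u j x / D.Wf u x * (pd D.γ i x / (2 * D.γ x)) -
          pd u i x * pd u j x / (2 * D.Wf u x) *
            ((∑ k, D.gradUp u k x * pd D.γ k x) / (D.γ x) ^ 2) := by
  have hγ := (D.γ_pos x).ne'
  have cancel_γ (c : ℝ) : D.γ x * (c / (2 * D.γ x ^ 2)) = c / (2 * D.γ x) := by
    field_simp
  have hsff : D.sff u i j x =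
      (D.hess u i j x - pd u i x * (pd D.γ j x / (2 * D.γ x)) -
        pd u j x * (pd D.γ i x / (2 * D.γ x)) -
        pd u i x * pd u j x * (D.inner2 D.γ u x / (2 * D.γ x ^ 2))) / D.Wf u x := by
    rw [sff, D.ambInner_normalN, D.ambCov_tangentV_fst, D.sum_ambCov_tangentV_snd_mul_pd, hess]
    ring
  constructor
  · rw [hsff, cancel_γ, cancel_γ]
    ring
  · rw [hsff, D.sum_gradUp_mul_pd]
    ring

/-- The second fundamental form of the Killing graph of `u`,
computed with respect to the unit normal `N = (1/W)(γY − ϑ_*∇u)` in the graph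
coordinates `X_*∂_i = ∂_i + u_i ∂_0`, has local components given by formula
(13), equivalently by formula (12), of the paper (here
`γ⟨∇̄_Y Y, ∂_j⟩ = γ_j/(2γ)` and `⟨∇̄_Y Y, ∇u⟩ = ⟨∇γ, ∇u⟩/(2γ²)`). -/
theorem second_fundamental_form_of_killing_graph
    {n : ℕ} (D : LeafData n) (Ω : Set (Fin n → ℝ))
    (hΩo : IsOpen Ω) (hΩb : Bornology.IsBounded Ω)
    (u : (Fin n → ℝ) → ℝ) (hu : ContDiff ℝ (⊤ : ℕ∞) u) :
    ∀ x ∈ Ω, ∀ i j : Fin n,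
      (D.sff u i j x =
          D.hess u i j x / D.Wf u x -
            pd u i x / D.Wf u x * (D.γ x * (pd D.γ j x / (2 * (D.γ x) ^ 2))) -
            pd u j x / D.Wf u x * (D.γ x * (pd D.γ i x / (2 * (D.γ x) ^ 2))) -
            pd u i x * pd u j x / D.Wf u x *
              (D.inner2 D.γ u x / (2 * (D.γ x) ^ 2))) ∧
        D.sff u i j x =
          D.hess u i j x / D.Wf u x -
            pd u i x / D.Wf u x * (pd D.γ j x / (2 * D.γ x)) -
            pd u j x / D.Wf u x * (pd D.γ i x / (2 * D.γ x)) -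
            pd u i x * pd u j x / (2 * D.Wf u x) *
              ((∑ k, D.gradUp u k x * pd D.γ k x) / (D.γ x) ^ 2) := by
  exact fun x _ => second_fundamental_form_of_killing_graph_general D
    (contDiff_infty.mp hu 2).contDiffAt

end KMCF
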